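/- arXiv:2507.09433 — 9 statements merged into one kernel-verified Lean document; each statement's English description precedes it below -/
import Mathlib

section
/- For every integer k ≥ 1 there exists a constant ε > 0 such that for all integers n ≥ k+1, the number of distinct values attained by the permanent on the set of (k+1)×n matrices with entries ±1 is at least ε·n^(k−2); that is, r_{k+1,n} ≥ ε·n^(k−2). -/
/-- The permanent of a rectangular `k × n` real matrix:
`per(A) = Σ_σ Π_i A_{i, σ(i)}`, the sum ranging over injections `σ : Fin k ↪ Fin n`. -/
noncomputable def rperm {k n : ℕ} (A : Matrix (Fin k) (Fin n) ℝ) : ℝ :=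
  ∑ σ : Fin k ↪ Fin n, ∏ i, A i (σ i)

/-- `permCount k n = r_{k,n}`: the number of distinct values attained by the permanent
on the set `Ω_{k,n}` of `k × n` matrices with `±1` entries. -/
noncomputable def permCount (k n : ℕ) : ℕ :=
  {x : ℝ | ∃ A : Matrix (Fin k) (Fin n) ℝ,
      (∀ i j, A i j = 1 ∨ A i j = -1) ∧ rperm A = x}.ncard

open Finset in
/-- Sum over all maps, injective on `T`, of the partial products. -/
noncomputable def QQ {ι J : Type} [Fintype ι] [DecidableEq ι] [Fintype J]
    (T : Finset ι) (a : ι → J → ℝ) : ℝ :=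
  by classical exact ∑ σ : ι → J, if Set.InjOn σ (T : Set ι) then ∏ i ∈ T, a i (σ i) else 0

section
variable {ι J : Type} [Fintype ι] [DecidableEq ι] [Fintype J]

lemma avg_lemma (i : ι) (F : (ι → J) → ℝ) :
    ∑ σ : ι → J, ∑ j : J, F (Function.update σ i j) = (Fintype.card J : ℝ) * ∑ σ : ι → J, F σ := by
  classical
  have key : ∀ (p : J × ({j // j ≠ i} → J)) (j : J),
      Function.update ((Equiv.funSplitAt i J).symm p) i j = (Equiv.funSplitAt i J).symm (j, p.2) := by
    intro p j
    funext x
    by_cases hx : x = i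
    · subst hx; simp [Equiv.funSplitAt, Equiv.piSplitAt]
    · simp [Equiv.funSplitAt, Equiv.piSplitAt, hx]
  rw [← Equiv.sum_comp (Equiv.funSplitAt i J).symm, ← Equiv.sum_comp (Equiv.funSplitAt i J).symm]
  simp_rw [key]
  rw [Fintype.sum_prod_type, Fintype.sum_prod_type]
  simp only [Finset.sum_const, Finset.card_univ, nsmul_eq_mul]
  congr 1
  rw [Finset.sum_comm]

lemma QQ_rec (b : ι → J → ℝ) (U : Finset ι) (i : ι) (hi : i ∉ U) (h : J → ℝ) :
    (Fintype.card J : ℝ) * QQ (insert i U) (Function.update b i h)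
      = (∑ j, h j) * QQ U b - ∑ i' ∈ U, QQ U (Function.update b i' (fun j => b i' j * h j)) := by
  classical
  unfold QQ
  rw [← avg_lemma i, Finset.sum_comm (s := U), Finset.mul_sum, ← Finset.sum_sub_distrib]
  refine Finset.sum_congr rfl fun σ _ => ?_
  have hinj : ∀ j, Set.InjOn (Function.update σ i j) ((insert i U : Finset ι) : Set ι) ↔
      (Set.InjOn σ (U : Set ι) ∧ j ∉ U.image σ) := by
    intro j
    rw [Finset.coe_insert, Set.injOn_insert (by simpa using hi)]
    have e : Set.EqOn (Function.update σ i j) σ (U : Set ι) := by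
      intro x hx
      have : x ≠ i := by rintro rfl; exact hi hx
      simp [this]
    rw [e.injOn_iff, e.image_eq]
    simp
  have hprod : ∀ j, ∏ x ∈ insert i U, Function.update b i h x (Function.update σ i j x)
      = h j * ∏ x ∈ U, b x (σ x) := by
    intro j
    rw [Finset.prod_insert hi]
    congr 1
    · simp
    · refine Finset.prod_congr rfl fun x hx => ?_
      have : x ≠ i := by rintro rfl; exact hi hx
      simp [this]
  simp_rw [hinj, hprod]
  have hup : ∀ i' ∈ U, ∏ x ∈ U, Function.update b i' (fun j => b i' j * h j) x (σ x)
      = h (σ i') * ∏ x ∈ U, b x (σ x) := by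
    intro i' hi'
    rw [← Finset.mul_prod_erase U _ hi', ← Finset.mul_prod_erase U (fun x => b x (σ x)) hi']
    have : ∏ x ∈ U.erase i', Function.update b i' (fun j => b i' j * h j) x (σ x)
        = ∏ x ∈ U.erase i', b x (σ x) := by
      refine Finset.prod_congr rfl fun x hx => ?_
      simp [Finset.ne_of_mem_erase hx]
    rw [this]
    simp
    ring
  by_cases hU : Set.InjOn σ (U : Set ι)
  · simp only [hU, true_and, if_true]
    rw [Finset.sum_congr rfl hup, ← Finset.sum_mul, ← sub_mul]
    have e1 : ∀ j, (if j ∉ U.image σ then h j * ∏ x ∈ U, b x (σ x) else 0)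
       = (h j - if j ∈ U.image σ then h j else 0) * ∏ x ∈ U, b x (σ x) := by
      intro j; by_cases hj : j ∈ U.image σ <;> simp [hj]
    rw [Finset.sum_congr rfl (fun j _ => e1 j), ← Finset.sum_mul, Finset.sum_sub_distrib]
    congr 2
    rw [Finset.sum_ite_mem, Finset.univ_inter, Finset.sum_image hU]
  · simp [hU]

lemma QQ_zero [Nonempty J] (b : ι → J → ℝ) (hb : ∀ i j, b i j * b i j = 1) (g : J → ℝ)
    (hg : ∀ S : Finset ι, S.Nonempty → ∑ j, g j * ∏ x ∈ S, b x j = 0) :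
    ∀ (m : ℕ) (U : Finset ι), U.card = m → ∀ (i : ι), i ∉ U → ∀ S : Finset ι, ¬ S ⊆ U →
      QQ (insert i U) (Function.update b i (fun j => g j * ∏ x ∈ S, b x j)) = 0 := by
  classical
  intro m
  have hn : (Fintype.card J : ℝ) ≠ 0 := by exact_mod_cast Fintype.card_ne_zero
  induction m with
  | zero =>
    intro U hU i hi S hS
    have h := QQ_rec b U i hi (fun j => g j * ∏ x ∈ S, b x j)
    have hS' : S.Nonempty := by
      rw [Finset.nonempty_iff_ne_empty]; rintro rfl; simp at hS
    rw [hg S hS', Finset.card_eq_zero.1 hU] at h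
    rw [Finset.card_eq_zero.1 hU]
    simpa [hn] using h
  | succ m ih =>
    intro U hU i hi S hS
    have h := QQ_rec b U i hi (fun j => g j * ∏ x ∈ S, b x j)
    have hS' : S.Nonempty := by
      rw [Finset.nonempty_iff_ne_empty]; rintro rfl; simp at hS
    rw [hg S hS', Finset.sum_eq_zero] at h
    · simpa [hn] using h
    intro i' hi'
    have hc : (U.erase i').card = m := by rw [Finset.card_erase_of_mem hi', hU]; rfl
    by_cases hiS : i' ∈ S
    · have h2 := ih (U.erase i') hc i' (Finset.notMem_erase _ _) (S.erase i') (by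
        intro hh; apply hS; intro x hx
        by_cases hxi : x = i'
        · rwa [hxi]
        · exact Finset.mem_of_mem_erase (hh (Finset.mem_erase.2 ⟨hxi, hx⟩)))
      rw [Finset.insert_erase hi'] at h2
      rw [← h2]
      congr 2
      funext j
      rw [← Finset.mul_prod_erase S _ hiS]
      linear_combination (g j * ∏ x ∈ S.erase i', b x j) * hb i' j
    · have h2 := ih (U.erase i') hc i' (Finset.notMem_erase _ _) (insert i' S) (by
        intro hh
        exact Finset.notMem_erase i' U (hh (Finset.mem_insert_self _ _)))
      rw [Finset.insert_erase hi'] at h2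
      rw [← h2]
      congr 2
      funext j
      rw [Finset.prod_insert hiS]
      ring

lemma QQ_val [Nonempty J] (b : ι → J → ℝ) (hb : ∀ i j, b i j * b i j = 1) (g : J → ℝ)
    (hg : ∀ S : Finset ι, S.Nonempty → ∑ j, g j * ∏ x ∈ S, b x j = 0) :
    ∀ (m : ℕ) (S : Finset ι), S.card = m → ∀ (U : Finset ι) (i : ι), i ∉ U → S ⊆ U →
      (Fintype.card J : ℝ) ^ (m + 1) *
      QQ (insert i U) (Function.update b i (fun j => g j * ∏ x ∈ S, b x j))
        = (-1) ^ m * (m.factorial : ℝ) * QQ (U \ S) b * ∑ j, g j := by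
  classical
  intro m
  induction m with
  | zero =>
    intro S hS U i hi hSU
    have h := QQ_rec b U i hi (fun j => g j * ∏ x ∈ S, b x j)
    obtain rfl := Finset.card_eq_zero.1 hS
    rw [Finset.sum_eq_zero (s := U)] at h
    · simp only [Finset.prod_empty, mul_one] at h
      simp [h, mul_comm]
    intro i' hi'
    have h2 := QQ_zero b hb g hg _ (U.erase i') rfl i' (Finset.notMem_erase _ _) {i'} (by simp)
    rw [Finset.insert_erase hi'] at h2
    rw [← h2]
    congr 2
    funext j
    simp [mul_comm]
  | succ m ih =>
    intro S hS U i hi hSU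
    have h := QQ_rec b U i hi (fun j => g j * ∏ x ∈ S, b x j)
    have hS' : S.Nonempty := by rw [← Finset.card_pos, hS]; omega
    rw [hg S hS', ← Finset.sum_subset hSU] at h
    · rw [pow_succ, mul_assoc, h, zero_mul, zero_sub, mul_neg, Finset.mul_sum]
      rw [Finset.sum_congr rfl (g := fun _ => (-1) ^ m * (m.factorial : ℝ) * QQ (U \ S) b * ∑ j, g j)]
      · rw [Finset.sum_const, hS, Nat.factorial_succ]
        push_cast
        simp only [nsmul_eq_mul]
        push_cast
        ring
      intro i' hiS
      have hi' := hSU hiS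
      have h2 := ih (S.erase i') (by rw [Finset.card_erase_of_mem hiS, hS]; rfl) (U.erase i') i'
        (Finset.notMem_erase _ _) (Finset.erase_subset_erase _ hSU)
      rw [Finset.insert_erase hi'] at h2
      have e : U.erase i' \ S.erase i' = U \ S := by
        ext x; simp only [Finset.mem_sdiff, Finset.mem_erase]
        constructor
        · rintro ⟨⟨h1, h4⟩, h3⟩; exact ⟨h4, fun hx => h3 ⟨h1, hx⟩⟩
        · rintro ⟨h1, h4⟩
          exact ⟨⟨fun hx => h4 (hx ▸ hiS), h1⟩, fun hx => h4 hx.2⟩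
      rw [e] at h2
      rw [← h2]
      congr 3
      funext j
      rw [← Finset.mul_prod_erase S _ hiS]
      linear_combination (g j * ∏ x ∈ S.erase i', b x j) * hb i' j
    · intro i' hi' hiS
      have h2 := QQ_zero b hb g hg _ (U.erase i') rfl i' (Finset.notMem_erase _ _) (insert i' S) (by
        intro hh
        exact Finset.notMem_erase i' U (hh (Finset.mem_insert_self _ _)))
      rw [Finset.insert_erase hi'] at h2
      rw [← h2]
      congr 2
      funext j
      rw [Finset.prod_insert hiS]
      ring

lemma abs_prod_le_one (b : ι → J → ℝ) (hb : ∀ i j, |b i j| ≤ 1) (T : Finset ι) (σ : ι → J) :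
    |∏ i ∈ T, b i (σ i)| ≤ 1 := by
  rw [Finset.abs_prod]
  exact Finset.prod_le_one (fun _ _ => abs_nonneg _) (fun _ _ => hb _ _)

lemma QQ_upper (b : ι → J → ℝ) (hb : ∀ i j, |b i j| ≤ 1) (T : Finset ι) :
    QQ T b ≤ (Fintype.card J : ℝ) ^ Fintype.card ι := by
  classical
  unfold QQ
  calc _ ≤ ∑ σ : ι → J, (1 : ℝ) := by
        refine Finset.sum_le_sum fun σ _ => ?_
        split_ifs
        · exact (le_abs_self _).trans (abs_prod_le_one b hb T σ)
        · norm_num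
    _ = _ := by simp

lemma QQ_lower (b : ι → J → ℝ) (hb : ∀ i j, |b i j| ≤ 1) (D : Finset J)
    (hD : ∀ i, ∀ j ∉ D, b i j = 1) (T : Finset ι) :
    (Fintype.card J : ℝ) ^ Fintype.card ι * (Fintype.card J -
      2 * (Fintype.card ι * D.card + Fintype.card ι * Fintype.card ι))
      ≤ (Fintype.card J : ℝ) * QQ T b := by
  classical
  have h1 : ∀ i : ι, (Fintype.card J : ℝ) * ∑ σ : ι → J, (if σ i ∈ D then (1 : ℝ) else 0)
      = (Fintype.card J : ℝ) ^ Fintype.card ι * D.card := by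
    intro i
    rw [← avg_lemma i]
    simp
  have h2 : ∀ i i' : ι, (Fintype.card J : ℝ) *
      ∑ σ : ι → J, (if σ i = σ i' ∧ i' ≠ i then (1 : ℝ) else 0)
      ≤ (Fintype.card J : ℝ) ^ Fintype.card ι := by
    intro i i'
    rw [← avg_lemma i]
    by_cases hii : i' = i
    · simp [hii]
    · simp [hii]
  have hpt : ∀ σ : ι → J, 1 - 2 * (∑ i, (if σ i ∈ D then (1 : ℝ) else 0) +
      ∑ i, ∑ i', (if σ i = σ i' ∧ i' ≠ i then (1 : ℝ) else 0)) ≤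
      if Set.InjOn σ (T : Set ι) then ∏ i ∈ T, b i (σ i) else 0 := by
    intro σ
    have hA : ∀ i, (0 : ℝ) ≤ (if σ i ∈ D then (1 : ℝ) else 0) := by intro i; split_ifs <;> norm_num
    have hB : ∀ i i', (0 : ℝ) ≤ (if σ i = σ i' ∧ i' ≠ i then (1 : ℝ) else 0) := by
      intro i i'; split_ifs <;> norm_num
    have hB' : ∀ i, (0 : ℝ) ≤ ∑ i', (if σ i = σ i' ∧ i' ≠ i then (1 : ℝ) else 0) :=
      fun i => Finset.sum_nonneg fun i' _ => hB i i'
    have hAs := Finset.sum_nonneg fun i (_ : i ∈ (Finset.univ : Finset ι)) => hA i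
    have hBs := Finset.sum_nonneg fun i (_ : i ∈ (Finset.univ : Finset ι)) => hB' i
    have hlow : (-1 : ℝ) ≤ if Set.InjOn σ (T : Set ι) then ∏ i ∈ T, b i (σ i) else 0 := by
      split_ifs
      · exact (abs_le.1 (abs_prod_le_one b hb T σ)).1
      · norm_num
    by_cases c1 : ∃ i, σ i ∈ D
    · obtain ⟨i, hi⟩ := c1
      have := Finset.single_le_sum (fun i _ => hA i) (Finset.mem_univ i)
      rw [if_pos hi] at this
      linarith
    by_cases c2 : ∃ i i', σ i = σ i' ∧ i' ≠ i
    · obtain ⟨i, i', hi⟩ := c2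
      have t1 := Finset.single_le_sum (fun i _ => hB' i) (Finset.mem_univ i)
      have t2 := Finset.single_le_sum (fun i' _ => hB i i') (Finset.mem_univ i')
      rw [if_pos hi] at t2
      linarith
    have c3 : Set.InjOn σ (T : Set ι) := by
      intro x _ y _ hxy
      by_contra hne
      exact c2 ⟨x, y, hxy, fun h => hne h.symm⟩
    rw [if_pos c3, Finset.prod_eq_one]
    · linarith
    · intro i _
      exact hD i _ fun h => c1 ⟨i, h⟩
  have hs := Finset.sum_le_sum fun σ (_ : σ ∈ (Finset.univ : Finset (ι → J))) => hpt σ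
  have hn : (0 : ℝ) ≤ Fintype.card J := by positivity
  have hs' := mul_le_mul_of_nonneg_left hs hn
  unfold QQ
  refine le_trans ?_ hs'
  rw [Finset.sum_sub_distrib, ← Finset.mul_sum, Finset.sum_add_distrib,
    Finset.sum_comm, Finset.sum_comm (f := fun σ i => ∑ i', _)]
  have e1 : (Fintype.card J : ℝ) * ∑ i, ∑ σ : ι → J, (if σ i ∈ D then (1 : ℝ) else 0)
      = Fintype.card ι * ((Fintype.card J : ℝ) ^ Fintype.card ι * D.card) := by
    rw [Finset.mul_sum, Finset.sum_congr rfl (fun i _ => h1 i)]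
    simp
  have e2 : (Fintype.card J : ℝ) * ∑ i, ∑ σ : ι → J, ∑ i',
      (if σ i = σ i' ∧ i' ≠ i then (1 : ℝ) else 0)
      ≤ Fintype.card ι * (Fintype.card ι * (Fintype.card J : ℝ) ^ Fintype.card ι) := by
    rw [Finset.mul_sum]
    calc _ ≤ ∑ i : ι, (Fintype.card ι * (Fintype.card J : ℝ) ^ Fintype.card ι) := by
          refine Finset.sum_le_sum fun i _ => ?_
          rw [Finset.sum_comm, Finset.mul_sum]
          calc _ ≤ ∑ i' : ι, (Fintype.card J : ℝ) ^ Fintype.card ι :=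
                Finset.sum_le_sum fun i' _ => h2 i i'
            _ = _ := by simp
      _ = _ := by simp
  have e3 : ∑ σ : ι → J, (1 : ℝ) = (Fintype.card J : ℝ) ^ Fintype.card ι := by simp
  rw [e3]
  nlinarith

lemma QQ_add (b : ι → J → ℝ) (U : Finset ι) (i : ι) (hi : i ∈ U) {τ : Type} (s : Finset τ)
    (h : τ → J → ℝ) :
    QQ U (Function.update b i (fun j => ∑ t ∈ s, h t j)) = ∑ t ∈ s, QQ U (Function.update b i (h t)) := by
  classical
  unfold QQ
  rw [Finset.sum_comm]
  refine Finset.sum_congr rfl fun σ _ => ?_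
  have e : ∀ f : J → ℝ, ∏ x ∈ U, Function.update b i f x (σ x) = f (σ i) * ∏ x ∈ U.erase i, b x (σ x) := by
    intro f
    rw [← Finset.mul_prod_erase U _ hi]
    congr 1
    · simp
    · refine Finset.prod_congr rfl fun x hx => ?_
      simp [Finset.ne_of_mem_erase hx]
  simp_rw [e]
  split_ifs
  · rw [Finset.sum_mul]
  · simp

end

lemma digits_inj {K N : ℕ} (D : Fin K → ℝ) (hD0 : ∀ t, D t ≠ 0)
    (hD : ∀ t t', t < t' → ((K : ℝ) * N + 1) * |D t'| ≤ |D t|)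
    (w w' : Fin K → Fin (N + 1))
    (h : ∑ t, D t * ((w t : ℕ) : ℝ) = ∑ t, D t * ((w' t : ℕ) : ℝ)) : w = w' := by
  classical
  by_contra hne
  have hex : (Finset.univ.filter fun t => w t ≠ w' t).Nonempty := by
    by_contra hc
    apply hne
    funext t
    by_contra ht
    exact hc ⟨t, by simpa using ht⟩
  obtain ⟨t, ht, hmin⟩ := Finset.exists_min_image _ id hex
  simp only [Finset.mem_filter, Finset.mem_univ, true_and, id] at ht hmin
  have h0 : ∑ s, D s * (((w s : ℕ) : ℝ) - ((w' s : ℕ) : ℝ)) = 0 := by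
    simp only [mul_sub, Finset.sum_sub_distrib]
    rw [h, sub_self]
  rw [← Finset.add_sum_erase _ _ (Finset.mem_univ t)] at h0
  have habs : |D t * (((w t : ℕ) : ℝ) - ((w' t : ℕ) : ℝ))|
      ≤ ∑ s ∈ Finset.univ.erase t, |D s * (((w s : ℕ) : ℝ) - ((w' s : ℕ) : ℝ))| := by
    rw [eq_neg_of_add_eq_zero_left h0, abs_neg]
    exact Finset.abs_sum_le_sum_abs _ _
  have hge : |D t| ≤ |D t * (((w t : ℕ) : ℝ) - ((w' t : ℕ) : ℝ))| := by
    rw [abs_mul]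
    have : (1 : ℝ) ≤ |((w t : ℕ) : ℝ) - ((w' t : ℕ) : ℝ)| := by
      have h1 : ((w t : ℕ) : ℤ) - ((w' t : ℕ) : ℤ) ≠ 0 := by
        intro hh
        apply ht
        apply Fin.ext
        omega
      have := Int.one_le_abs h1
      exact_mod_cast this
    nlinarith [abs_nonneg (D t)]
  have hpos : (0 : ℝ) < (K : ℝ) * N + 1 := by positivity
  have hle : ∀ s ∈ Finset.univ.erase t,
      ((K : ℝ) * N + 1) * |D s * (((w s : ℕ) : ℝ) - ((w' s : ℕ) : ℝ))| ≤ N * |D t| := by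
    intro s hs
    have hst := Finset.ne_of_mem_erase hs
    by_cases hws : w s = w' s
    · rw [hws]; simp; positivity
    have hlt : t < s := lt_of_le_of_ne (hmin s hws) hst.symm
    have h1 := hD t s hlt
    have h2 : |((w s : ℕ) : ℝ) - ((w' s : ℕ) : ℝ)| ≤ N := by
      have a1 : ((w s : ℕ) : ℝ) ≤ N := by exact_mod_cast Nat.lt_succ_iff.1 (w s).2
      have a2 : ((w' s : ℕ) : ℝ) ≤ N := by exact_mod_cast Nat.lt_succ_iff.1 (w' s).2
      have a3 : (0 : ℝ) ≤ ((w s : ℕ) : ℝ) := by positivity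
      have a4 : (0 : ℝ) ≤ ((w' s : ℕ) : ℝ) := by positivity
      rw [abs_le]; constructor <;> linarith
    rw [abs_mul, ← mul_assoc, mul_comm (N : ℝ)]
    exact mul_le_mul h1 h2 (abs_nonneg _) (abs_nonneg _)
  have hsum := Finset.sum_le_sum hle
  rw [← Finset.mul_sum, Finset.sum_const, nsmul_eq_mul] at hsum
  have hcard : (((Finset.univ.erase t).card : ℕ) : ℝ) ≤ K := by
    exact_mod_cast (Finset.card_le_univ _).trans (by simp)
  have h5 : (((Finset.univ.erase t).card : ℕ) : ℝ) * (N * |D t|) ≤ K * (N * |D t|) :=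
    mul_le_mul_of_nonneg_right hcard (by positivity)
  have h6 := mul_le_mul_of_nonneg_left (hge.trans habs) hpos.le
  have h7 : 0 < |D t| := abs_pos.2 (hD0 t)
  nlinarith

lemma rperm_eq_QQ {K n : ℕ} {J : Type} [Fintype J] (e : Fin n ≃ J) (a : Fin K → J → ℝ) :
    rperm (Matrix.of fun i j => a i (e j)) = QQ Finset.univ a := by
  classical
  unfold rperm QQ
  rw [← Finset.sum_filter, Finset.sum_subtype (p := fun σ : Fin K → J => Function.Injective σ)]
  · rw [← Equiv.sum_comp ((Equiv.subtypeInjectiveEquivEmbedding (Fin K) J).trans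
      (Equiv.embeddingCongr (Equiv.refl _) e.symm))]
    refine Finset.sum_congr rfl fun σ _ => ?_
    refine Finset.prod_congr rfl fun i _ => ?_
    simp [Equiv.subtypeInjectiveEquivEmbedding]
  · intro σ; simp [Set.injOn_univ]

/-- Column index type: blocks of sign vectors, plus padding columns. -/
abbrev Cols (k N R : ℕ) : Type := (Fin (k + 1) × Fin N × (Fin (k + 1) → Bool)) ⊕ Fin R

/-- The base rows. -/
noncomputable def bb (k N R : ℕ) : Fin (k + 1) → Cols k N R → ℝ := fun i =>
  Sum.elim (fun p => if p.2.2 i then 1 else -1) (fun _ => 1)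

/-- Signs in block `t`. -/
noncomputable def gg (k N R : ℕ) (w : Fin (k + 1) → Fin (N + 1)) (t : Fin (k + 1)) :
    Cols k N R → ℝ :=
  Sum.elim (fun p => if p.1 = t then (if (p.2.1 : ℕ) < (w t : ℕ) then 1 else -1) else 0) (fun _ => 0)

/-- The pieces of the last row. -/
noncomputable def hh (k N R : ℕ) (w : Fin (k + 1) → Fin (N + 1)) :
    Option (Fin (k + 1)) → Cols k N R → ℝ
  | none => Sum.elim (fun _ => 0) (fun _ => 1)
  | some t => fun j => gg k N R w t j * ∏ i ∈ Finset.Iio t, bb k N R i j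

/-- The last row. -/
noncomputable def xx (k N R : ℕ) (w : Fin (k + 1) → Fin (N + 1)) : Cols k N R → ℝ :=
  fun j => ∑ t, hh k N R w t j

lemma bb_pm (k N R : ℕ) (i) (j) : bb k N R i j = 1 ∨ bb k N R i j = -1 := by
  rcases j with p | r
  · by_cases h : p.2.2 i <;> simp [bb, h]
  · simp [bb]

lemma prod_pm {ι : Type} (S : Finset ι) (f : ι → ℝ) (hf : ∀ i, f i = 1 ∨ f i = -1) :
    ∏ i ∈ S, f i = 1 ∨ ∏ i ∈ S, f i = -1 := by
  classical
  induction S using Finset.induction_on with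
  | empty => simp
  | insert a s ha ih =>
    rw [Finset.prod_insert ha]
    rcases hf a with h | h <;> rcases ih with h' | h' <;> simp [h, h']

lemma xx_pm (k N R : ℕ) (w) (j) : xx k N R w j = 1 ∨ xx k N R w j = -1 := by
  unfold xx
  rw [Fintype.sum_option]
  rcases j with p | r
  · rw [Finset.sum_eq_single p.1]
    · have := prod_pm (Finset.Iio p.1) (fun i => bb k N R i (Sum.inl p)) (fun i => bb_pm k N R i _)
      by_cases h : (p.2.1 : ℕ) < (w p.1 : ℕ) <;> rcases this with h' | h' <;>
        simp [hh, gg, h, h']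
    · intro t _ ht
      simp [hh, gg, ht.symm]
    · simp
  · left
    simp [hh, gg]

lemma walsh {K : ℕ} (S : Finset (Fin K)) (hS : S.Nonempty) :
    ∑ v : Fin K → Bool, ∏ i ∈ S, (if v i then (1 : ℝ) else -1) = 0 := by
  classical
  obtain ⟨a, ha⟩ := hS
  have h := Finset.prod_univ_sum (fun _ : Fin K => (Finset.univ : Finset Bool))
    (fun i c => if i ∈ S then (if c then (1 : ℝ) else -1) else 1)
  rw [Fintype.piFinset_univ, Finset.prod_eq_zero (Finset.mem_univ a) (by simp [ha])] at h
  rw [h]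
  refine Finset.sum_congr rfl fun v _ => ?_
  rw [Finset.prod_ite_mem, Finset.univ_inter]

lemma gg_sum_aux (k N R : ℕ) (w) (t : Fin (k + 1)) (S : Finset (Fin (k + 1))) :
    ∑ j, gg k N R w t j * ∏ x ∈ S, bb k N R x j
      = (∑ l : Fin N, if (l : ℕ) < (w t : ℕ) then (1 : ℝ) else -1) *
        ∑ v : Fin (k + 1) → Bool, ∏ i ∈ S, (if v i then (1 : ℝ) else -1) := by
  rw [Fintype.sum_sum_type, Fintype.sum_prod_type, Finset.sum_eq_single t]
  · rw [Fintype.sum_prod_type, Finset.sum_mul_sum]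
    simp [gg, bb]
  · intro s _ hs
    simp [gg, hs]
  · simp

lemma sum_signs (N a : ℕ) (ha : a ≤ N) :
    (∑ l : Fin N, if (l : ℕ) < a then (1 : ℝ) else -1) = 2 * a - N := by
  have h := Fin.sum_univ_eq_sum_range (fun l => if l < a then (1 : ℝ) else -1) N
  rw [h, ← Finset.sum_range_add_sum_Ico _ ha]
  rw [Finset.sum_congr rfl (g := fun _ => (1 : ℝ))
    (by intro x hx; rw [if_pos (Finset.mem_range.1 hx)])]
  rw [Finset.sum_congr (s₁ := Finset.Ico a N) rfl (g := fun _ => (-1 : ℝ))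
    (by intro x hx; rw [if_neg (not_lt.2 (Finset.mem_Ico.1 hx).1)])]
  simp
  rw [Nat.cast_sub ha]; ring

lemma gg_sum (k N R : ℕ) (w) (t : Fin (k + 1)) :
    ∑ j, gg k N R w t j = 2 ^ (k + 1) * (2 * ((w t : ℕ) : ℝ) - N) := by
  have h := gg_sum_aux k N R w t ∅
  simp only [Finset.prod_empty, mul_one] at h
  rw [h, sum_signs N _ (Nat.lt_succ_iff.1 (w t).2)]
  simp [mul_comm]

/-- Coefficients. -/
noncomputable def DD (k N R : ℕ) (t : Fin (k + 1)) : ℝ :=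
  (-1) ^ (t : ℕ) * ((t : ℕ).factorial : ℝ) *
    QQ (Finset.univ.erase (Fin.last k) \ Finset.Iio t) (bb k N R) * 2 ^ (k + 1) /
      (Fintype.card (Cols k N R) : ℝ) ^ ((t : ℕ) + 1)

lemma per_formula (k N R : ℕ) [Nonempty (Cols k N R)] (w : Fin (k + 1) → Fin (N + 1)) :
    QQ Finset.univ (Function.update (bb k N R) (Fin.last k) (xx k N R w)) =
      QQ Finset.univ (Function.update (bb k N R) (Fin.last k) (Sum.elim (fun _ => 0) (fun _ => 1)))
      + ∑ t, DD k N R t * (2 * ((w t : ℕ) : ℝ) - N) := by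
  unfold xx
  rw [QQ_add _ _ _ (Finset.mem_univ _), Fintype.sum_option]
  congr 1
  refine Finset.sum_congr rfl fun t _ => ?_
  have h := QQ_val (bb k N R) (by intro i j; rcases bb_pm k N R i j with h | h <;> simp [h])
    (gg k N R w t) (by intro S hS; rw [gg_sum_aux, walsh S hS, mul_zero])
    (t : ℕ) (Finset.Iio t) (by simp) (Finset.univ.erase (Fin.last k)) (Fin.last k)
    (Finset.notMem_erase _ _) (by
      intro x hx
      have h1 := Finset.mem_Iio.1 hx
      have h2 : x ≠ Fin.last k := (lt_of_lt_of_le h1 (Fin.le_last t)).ne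
      simp [h2])
  rw [Finset.insert_erase (Finset.mem_univ _), gg_sum] at h
  have hn : (Fintype.card (Cols k N R) : ℝ) ^ ((t : ℕ) + 1) ≠ 0 :=
    pow_ne_zero _ (by exact_mod_cast Fintype.card_ne_zero)
  unfold DD
  change QQ Finset.univ (Function.update (bb k N R) (Fin.last k)
    (fun j => gg k N R w t j * ∏ i ∈ Finset.Iio t, bb k N R i j)) = _
  rw [div_mul_eq_mul_div, eq_div_iff hn, mul_comm, h]
  ring

lemma per_inj (k N R n : ℕ) (hn : Fintype.card (Cols k N R) = n) (hn0 : 0 < n)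
    (h1 : 4 * ((k + 1) * ((k + 1) * (N * 2 ^ (k + 1))) + (k + 1) * (k + 1)) ≤ n)
    (h2 : 2 * ((k + 1) * N + 1) * (k + 1).factorial ≤ n) :
    Function.Injective fun w : Fin (k + 1) → Fin (N + 1) =>
      QQ Finset.univ (Function.update (bb k N R) (Fin.last k) (xx k N R w)) := by
  classical
  haveI : Nonempty (Cols k N R) := Fintype.card_pos_iff.1 (by omega)
  have hnR : (0 : ℝ) < n := by exact_mod_cast hn0
  have habs : ∀ i j, |bb k N R i j| ≤ 1 := by
    intro i j; rcases bb_pm k N R i j with h | h <;> simp [h]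
  have hup : ∀ T, QQ T (bb k N R) ≤ (n : ℝ) ^ (k + 1) := by
    intro T
    have := QQ_upper (bb k N R) habs T
    rwa [hn, Fintype.card_fin] at this
  have hlo : ∀ T, (n : ℝ) ^ (k + 1) / 2 ≤ QQ T (bb k N R) := by
    intro T
    have := QQ_lower (bb k N R) habs
      (Finset.univ.map (Function.Embedding.inl)) (by
        intro i j hj
        rcases j with p | r
        · exact absurd (by simp) hj
        · simp [bb]) T
    rw [hn, Fintype.card_fin, Finset.card_map, Finset.card_univ] at this
    simp only [Fintype.card_prod, Fintype.card_fin, Fintype.card_pi, Fintype.card_bool,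
      Finset.prod_const, Finset.card_univ] at this
    have h1' : (4 : ℝ) * ((k + 1) * ((k + 1) * (N * 2 ^ (k + 1))) + (k + 1) * (k + 1)) ≤ n := by
      exact_mod_cast h1
    push_cast at this
    have hp : (0 : ℝ) < (n : ℝ) ^ (k + 1) := by positivity
    have h3 : (n : ℝ) ^ (k + 1) * (n / 2) ≤ n * QQ T (bb k N R) := by
      refine le_trans (mul_le_mul_of_nonneg_left ?_ hp.le) this
      linarith
    have h4 : (n : ℝ) * ((n : ℝ) ^ (k + 1) / 2) ≤ n * QQ T (bb k N R) := by
      linarith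
    exact le_of_mul_le_mul_left h4 hnR
  have hQ0 : ∀ T, 0 < QQ T (bb k N R) := fun T => lt_of_lt_of_le (by positivity) (hlo T)
  have hDabs : ∀ t : Fin (k + 1), |DD k N R t| = ((t : ℕ).factorial : ℝ) *
      QQ (Finset.univ.erase (Fin.last k) \ Finset.Iio t) (bb k N R) * 2 ^ (k + 1) /
        (n : ℝ) ^ ((t : ℕ) + 1) := by
    intro t
    unfold DD
    rw [hn, abs_div, abs_mul, abs_mul, abs_mul, abs_pow, abs_neg, abs_one, one_pow, one_mul,
      abs_of_pos (hQ0 _)]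
    congr 1
    · congr 1
      · congr 1
        exact abs_of_nonneg (by positivity)
      · exact abs_of_nonneg (by positivity)
    · exact abs_of_nonneg (by positivity)
  have hD0 : ∀ t, DD k N R t ≠ 0 := by
    intro t
    rw [← abs_pos, hDabs]
    have := hQ0 (Finset.univ.erase (Fin.last k) \ Finset.Iio t)
    positivity
  intro w w' hw
  simp only [per_formula] at hw
  have hw2 := add_left_cancel hw
  refine digits_inj (DD k N R) hD0 ?_ w w' ?_
  · intro t t' htt
    rw [hDabs, hDabs]
    set q := QQ (Finset.univ.erase (Fin.last k) \ Finset.Iio t) (bb k N R)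
    set q' := QQ (Finset.univ.erase (Fin.last k) \ Finset.Iio t') (bb k N R)
    have hq : (n : ℝ) ^ (k + 1) / 2 ≤ q := hlo _
    have hq' : q' ≤ (n : ℝ) ^ (k + 1) := hup _
    have hqq : q' ≤ 2 * q := by linarith
    have hqpos : 0 < q := hQ0 _
    have hf : ((t' : ℕ).factorial : ℝ) ≤ ((k + 1).factorial : ℝ) := by
      exact_mod_cast Nat.factorial_le t'.2.le
    have hf1 : (1 : ℝ) ≤ ((t : ℕ).factorial : ℝ) := by exact_mod_cast Nat.factorial_pos _
    have h2' : 2 * (((k + 1 : ℕ) : ℝ) * N + 1) * ((k + 1).factorial : ℝ) ≤ n := by exact_mod_cast h2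
    obtain ⟨d, hd⟩ := Nat.exists_eq_add_of_lt (show (t : ℕ) < t' from htt)
    have hpow : (n : ℝ) * (n : ℝ) ^ ((t : ℕ) + 1) ≤ (n : ℝ) ^ ((t' : ℕ) + 1) := by
      rw [← pow_succ']
      exact pow_le_pow_right₀ (by exact_mod_cast hn0) (by omega)
    rw [← mul_div_assoc, div_le_div_iff₀ (by positivity) (by positivity)]
    have hM : (0 : ℝ) ≤ ((k + 1 : ℕ) : ℝ) * N + 1 := by positivity
    calc (((k + 1 : ℕ) : ℝ) * N + 1) * (((t' : ℕ).factorial : ℝ) * q' * 2 ^ (k + 1)) * (n : ℝ) ^ ((t : ℕ) + 1)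
        ≤ (((k + 1 : ℕ) : ℝ) * N + 1) * (((k + 1).factorial : ℝ) * (2 * q) * 2 ^ (k + 1)) * (n : ℝ) ^ ((t : ℕ) + 1) := by
          have : 0 ≤ q' := (hQ0 _).le
          gcongr
      _ = (2 * (((k + 1 : ℕ) : ℝ) * N + 1) * ((k + 1).factorial : ℝ)) * (q * 2 ^ (k + 1) * (n : ℝ) ^ ((t : ℕ) + 1)) := by ring
      _ ≤ n * (q * 2 ^ (k + 1) * (n : ℝ) ^ ((t : ℕ) + 1)) := by gcongr
      _ = 1 * q * 2 ^ (k + 1) * (n * (n : ℝ) ^ ((t : ℕ) + 1)) := by ring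
      _ ≤ ((t : ℕ).factorial : ℝ) * q * 2 ^ (k + 1) * (n : ℝ) ^ ((t' : ℕ) + 1) := by gcongr
  · simp only [mul_sub, Finset.sum_sub_distrib] at hw2
    have hw3 := sub_left_inj.1 hw2
    have e : ∀ u : Fin (k + 1) → Fin (N + 1), ∑ t, DD k N R t * (2 * ((u t : ℕ) : ℝ))
        = 2 * ∑ t, DD k N R t * ((u t : ℕ) : ℝ) := by
      intro u
      rw [Finset.mul_sum]
      exact Finset.sum_congr rfl fun t _ => by ring
    rw [e, e] at hw3
    linarith

lemma values_finite (k n : ℕ) : {x : ℝ | ∃ A : Matrix (Fin k) (Fin n) ℝ,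
      (∀ i j, A i j = 1 ∨ A i j = -1) ∧ rperm A = x}.Finite := by
  have h : {A : Matrix (Fin k) (Fin n) ℝ | ∀ i j, A i j = 1 ∨ A i j = -1}.Finite := by
    have h1 : {f : Fin n → ℝ | ∀ j, f j ∈ ({1, -1} : Set ℝ)}.Finite :=
      Set.Finite.pi' fun _ => Set.toFinite _
    exact Set.Finite.pi' (t := fun _ : Fin k => {f : Fin n → ℝ | ∀ j, f j ∈ ({1, -1} : Set ℝ)})
      fun _ => h1
  exact h.image rperm

lemma permCount_pos (k n : ℕ) : 1 ≤ permCount k n := by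
  unfold permCount
  rw [Nat.one_le_iff_ne_zero, ← Nat.pos_iff_ne_zero, Set.ncard_pos (values_finite k n)]
  exact ⟨_, Matrix.of fun _ _ => 1, fun i j => Or.inl rfl, rfl⟩

lemma permCount_lower (k N n : ℕ) (hn0 : 0 < n) (h3 : (k + 1) * (N * 2 ^ (k + 1)) ≤ n)
    (h1 : 4 * ((k + 1) * ((k + 1) * (N * 2 ^ (k + 1))) + (k + 1) * (k + 1)) ≤ n)
    (h2 : 2 * ((k + 1) * N + 1) * (k + 1).factorial ≤ n) :
    (N + 1) ^ (k + 1) ≤ permCount (k + 1) n := by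
  classical
  obtain ⟨R, hR⟩ := Nat.exists_eq_add_of_le h3
  have hc : Fintype.card (Cols k N R) = n := by
    simp [Cols, hR]
  have hinj := per_inj k N R n hc hn0 h1 h2
  let e : Fin n ≃ Cols k N R := (Fintype.equivFinOfCardEq hc).symm
  unfold permCount
  have hsub : Set.range (fun w : Fin (k + 1) → Fin (N + 1) =>
      QQ Finset.univ (Function.update (bb k N R) (Fin.last k) (xx k N R w))) ⊆
      {x : ℝ | ∃ A : Matrix (Fin (k + 1)) (Fin n) ℝ,
      (∀ i j, A i j = 1 ∨ A i j = -1) ∧ rperm A = x} := by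
    rintro _ ⟨w, rfl⟩
    refine ⟨_, ?_, rperm_eq_QQ e _⟩
    intro i j
    by_cases hi : i = Fin.last k
    · subst hi
      simpa using xx_pm k N R w (e j)
    · simpa [hi] using bb_pm k N R i (e j)
  have := Set.ncard_le_ncard hsub (values_finite _ _)
  refine le_trans (le_of_eq ?_) this
  rw [← Set.image_univ, Set.ncard_image_of_injective _ hinj, Set.ncard_univ, Nat.card_eq_fintype_card]
  simp

theorem stmt0 (k : ℕ) (hk : 1 ≤ k) :
    ∃ ε : ℝ, 0 < ε ∧ ∀ n : ℕ, k + 1 ≤ n →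
      ε * (n : ℝ) ^ (k - 2) ≤ (permCount (k + 1) n : ℝ) := by
  obtain ⟨C, hC1, hCa, hCb, hCc⟩ : ∃ C : ℕ, 1 ≤ C ∧ (k + 1) * 2 ^ (k + 1) ≤ C ∧
      4 * ((k + 1) * ((k + 1) * 2 ^ (k + 1)) + (k + 1) * (k + 1)) ≤ C ∧
      2 * ((k + 1) + 1) * (k + 1).factorial ≤ C :=
    ⟨1 + (k + 1) * 2 ^ (k + 1) + 4 * ((k + 1) * ((k + 1) * 2 ^ (k + 1)) + (k + 1) * (k + 1)) +
      2 * ((k + 1) + 1) * (k + 1).factorial, by omega, by omega, by omega, by omega⟩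
  have hCR : (1 : ℝ) ≤ C := by exact_mod_cast hC1
  have hC0 : (0 : ℝ) < C := by linarith
  refine ⟨1 / (C : ℝ) ^ (k + 1), by positivity, fun n hn => ?_⟩
  have hn1 : (1 : ℝ) ≤ n := by exact_mod_cast (by omega : 1 ≤ n)
  by_cases hnC : n < C
  · have h1 : (1 : ℝ) ≤ permCount (k + 1) n := by exact_mod_cast permCount_pos _ _
    refine le_trans ?_ h1
    rw [one_div_mul_eq_div, div_le_one (by positivity)]
    calc (n : ℝ) ^ (k - 2) ≤ (C : ℝ) ^ (k - 2) := by gcongr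
      _ ≤ (C : ℝ) ^ (k + 1) := pow_le_pow_right₀ hCR (by omega)
  · push Not at hnC
    have hN1 : 1 ≤ n / C := (Nat.one_le_div_iff (by omega)).2 hnC
    have hNC : C * (n / C) ≤ n := Nat.mul_div_le n C
    have hlt : n < C * (n / C + 1) := by
      have := Nat.lt_mul_div_succ n (show 0 < C by omega)
      simpa using this
    set N := n / C
    have hb := permCount_lower k N n (by omega)
      (by calc _ = (k + 1) * 2 ^ (k + 1) * N := by ring
            _ ≤ C * N := by gcongr
            _ ≤ n := hNC)
      (by calc _ ≤ 4 * ((k + 1) * ((k + 1) * (N * 2 ^ (k + 1))) + (k + 1) * (k + 1) * N) := by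
                have := Nat.le_mul_of_pos_right ((k + 1) * (k + 1)) hN1; omega
            _ = 4 * ((k + 1) * ((k + 1) * 2 ^ (k + 1)) + (k + 1) * (k + 1)) * N := by ring
            _ ≤ C * N := by gcongr
            _ ≤ n := hNC)
      (by calc _ ≤ 2 * ((k + 1) * N + N) * (k + 1).factorial := by gcongr
            _ = 2 * ((k + 1) + 1) * (k + 1).factorial * N := by ring
            _ ≤ C * N := by gcongr
            _ ≤ n := hNC)
    have hbR : ((N : ℝ) + 1) ^ (k + 1) ≤ (permCount (k + 1) n : ℝ) := by exact_mod_cast hb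
    refine le_trans ?_ hbR
    have hltR : (n : ℝ) ≤ C * ((N : ℝ) + 1) := by exact_mod_cast hlt.le
    rw [one_div_mul_eq_div, div_le_iff₀ (by positivity)]
    calc (n : ℝ) ^ (k - 2) ≤ (n : ℝ) ^ (k + 1) := pow_le_pow_right₀ hn1 (by omega)
      _ ≤ (C * ((N : ℝ) + 1)) ^ (k + 1) := by gcongr
      _ = _ := by rw [mul_pow]; ring
end

section
/- Let k ≤ n and let n_1,…,n_k be nonnegative integers with n_1+⋯+n_k ≤ n. Then per(B_{n_1,…,n_k}) = Σ_{ℓ=0}^{k} (−2)^ℓ · (n−ℓ)_{k−ℓ} · e_ℓ(n_1,…,n_k), where (m)_j = m(m−1)⋯(m−j+1) is the falling factorial and e_ℓ is the ℓ-th elementary symmetric polynomial in k variables. -/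
/-- Sum over injections of a product over `S`, for rows with pairwise disjoint supports. -/
theorem sum_emb_aux {k n : ℕ} (x : Fin k → Fin n → ℝ)
    (hx : ∀ i i' j, i ≠ i' → x i j * x i' j = 0) (S : Finset (Fin k)) :
    ∑ σ : Fin k ↪ Fin n, ∏ i ∈ S, x i (σ i) =
      (Nat.descFactorial (n - S.card) (k - S.card) : ℝ) * ∏ i ∈ S, ∑ j, x i j := by
  classical
  let e : (Fin k ↪ Fin n) ≃ (Σ f : {i // i ∈ S} ↪ Fin n, {i // ¬ i ∈ S} ↪ ↥(Set.range f)ᶜ) :=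
    (Equiv.embeddingCongr (Equiv.sumCompl (fun i => i ∈ S)).symm (Equiv.refl _)).trans
      Equiv.sumEmbeddingEquivSigmaEmbeddingRestricted
  have he : ∀ σ : Fin k ↪ Fin n, ∀ i : {i // i ∈ S}, (e σ).1 i = σ i := fun σ i => rfl
  have h1 : ∑ σ : Fin k ↪ Fin n, ∏ i ∈ S, x i (σ i) =
      ∑ p : (Σ f : {i // i ∈ S} ↪ Fin n, {i // ¬ i ∈ S} ↪ ↥(Set.range f)ᶜ),
        ∏ i : {i // i ∈ S}, x i (p.1 i) := by
    refine Fintype.sum_equiv e _ _ fun σ => ?_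
    rw [← Finset.prod_coe_sort S]
    exact Finset.prod_congr rfl fun i _ => by rw [he]
  have h2 : ∀ f : {i // i ∈ S} ↪ Fin n,
      Fintype.card ({i // ¬ i ∈ S} ↪ ↥(Set.range f)ᶜ) =
        Nat.descFactorial (n - S.card) (k - S.card) := by
    intro f
    rw [Fintype.card_embedding_eq, Fintype.card_compl_set, Fintype.card_subtype_compl,
      Set.card_range_of_injective f.injective]
    simp
  have h3 : ∑ f : {i // i ∈ S} ↪ Fin n, ∏ i : {i // i ∈ S}, x i (f i) = ∏ i ∈ S, ∑ j, x i j := by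
    rw [← Finset.prod_coe_sort S, Finset.prod_univ_sum, Fintype.piFinset_univ]
    refine Finset.sum_of_injOn (fun f => (f : {i // i ∈ S} → Fin n))
      (fun f _ g _ h => DFunLike.coe_injective h) (fun _ _ => by simp) ?_ (fun _ _ => rfl)
    intro g _ hg
    have hni : ¬ Function.Injective g := fun h => hg ⟨⟨g, h⟩, by simp, rfl⟩
    simp only [Function.Injective, not_forall] at hni
    obtain ⟨a, b, hab, hne⟩ := hni
    have h0 := hx a b (g a) (fun h => hne (Subtype.ext h))
    rcases mul_eq_zero.1 h0 with h | h
    · exact Finset.prod_eq_zero (Finset.mem_univ a) h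
    · exact Finset.prod_eq_zero (Finset.mem_univ b) (by rw [← hab]; exact h)
  rw [h1, Fintype.sum_sigma, ← h3, Finset.mul_sum]
  refine Finset.sum_congr rfl fun f _ => ?_
  dsimp only
  rw [Finset.sum_const, Finset.card_univ, h2, nsmul_eq_mul]

/-- For a `k × n` ±1 matrix `B = B_{n_1,…,n_k}` (every column contains at most one `-1`
and row `i` contains exactly `n_i` entries equal to `-1`, with `n_1 + ⋯ + n_k ≤ n`),
`per(B) = Σ_{ℓ=0}^{k} (−2)^ℓ (n−ℓ)_{k−ℓ} e_ℓ(n_1,…,n_k)`. -/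
theorem stmt2 (k n : ℕ) (hkn : k ≤ n) (nv : Fin k → ℕ) (hsum : ∑ i, nv i ≤ n)
    (B : Matrix (Fin k) (Fin n) ℝ)
    (hpm : ∀ i j, B i j = 1 ∨ B i j = -1)
    (hcol : ∀ j, (Finset.univ.filter fun i => B i j = -1).card ≤ 1)
    (hrow : ∀ i, (Finset.univ.filter fun j => B i j = -1).card = nv i) :
    rperm B = ∑ ℓ ∈ Finset.range (k + 1),
      (-2 : ℝ) ^ ℓ * (Nat.descFactorial (n - ℓ) (k - ℓ) : ℝ) *
        ∑ S ∈ Finset.powersetCard ℓ (Finset.univ : Finset (Fin k)), ∏ i ∈ S, (nv i : ℝ) := by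
  classical
  let x : Fin k → Fin n → ℝ := fun i j => if B i j = -1 then 1 else 0
  have hB : ∀ i j, B i j = (-2) * x i j + 1 := by
    intro i j
    rcases hpm i j with h | h <;> simp only [x, h] <;> norm_num
  have hx : ∀ i i' j, i ≠ i' → x i j * x i' j = 0 := by
    intro i i' j hne
    by_cases h : B i j = -1
    · by_cases h' : B i' j = -1
      · exact absurd (Finset.card_le_one.1 (hcol j) i (by simp [h]) i' (by simp [h'])) hne
      · simp [x, h']
    · simp [x, h]
  have hs : ∀ i, ∑ j, x i j = (nv i : ℝ) := by
    intro i
    rw [← hrow i]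
    simp [x]
  have key : rperm B = ∑ S ∈ (Finset.univ : Finset (Fin k)).powerset,
      (-2 : ℝ) ^ S.card * (Nat.descFactorial (n - S.card) (k - S.card) : ℝ) *
        ∏ i ∈ S, (nv i : ℝ) := by
    unfold rperm
    simp only [hB, Finset.prod_add_one, Finset.prod_mul_distrib, Finset.prod_const]
    rw [Finset.sum_comm]
    refine Finset.sum_congr rfl fun S _ => ?_
    rw [← Finset.mul_sum, sum_emb_aux x hx S]
    simp only [hs, mul_assoc]
  rw [key, Finset.sum_powerset, Finset.card_univ, Fintype.card_fin]
  refine Finset.sum_congr rfl fun l _ => ?_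
  rw [Finset.mul_sum]
  refine Finset.sum_congr rfl fun S hS => ?_
  rw [(Finset.mem_powersetCard.1 hS).2]
end

section
/- Let 1 ≤ k ≤ ℓ ≤ n, let A be a k×n real matrix, and let J_{ℓ−k,n} be the (ℓ−k)×n all-ones matrix. Then per(A ∗ J_{ℓ−k,n}) = per(A) · (n−k)_{ℓ−k}, where A ∗ J_{ℓ−k,n} is the ℓ×n matrix obtained by concatenating the rows of A with the rows of J_{ℓ−k,n}, and (m)_j = m(m−1)⋯(m−j+1) is the falling factorial. -/
/-- For `1 ≤ k ≤ ℓ ≤ n` and a `k × n` real matrix `A`,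
`per(A ∗ J_{ℓ−k,n}) = per(A) · (n−k)_{ℓ−k}`, where `A ∗ J_{ℓ−k,n}` is the row
concatenation of `A` with the all-ones `(ℓ−k) × n` matrix. -/
theorem stmt3 (k l n : ℕ) (hk : 1 ≤ k) (hkl : k ≤ l) (hln : l ≤ n)
    (A : Matrix (Fin k) (Fin n) ℝ) :
    rperm (Matrix.of (Fin.append A (fun (_ : Fin (l - k)) (_ : Fin n) => (1 : ℝ)))) =
      rperm A * (Nat.descFactorial (n - k) (l - k) : ℝ) := by
  unfold rperm
  rw [← Equiv.sum_comp (Equiv.embeddingCongr finSumFinEquiv (Equiv.refl (Fin n)))]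
  rw [← Equiv.sum_comp (Equiv.sumEmbeddingEquivSigmaEmbeddingRestricted).symm]
  rw [Fintype.sum_sigma, Finset.sum_mul]
  refine Finset.sum_congr rfl fun f _ => ?_
  have hc : Fintype.card (Fin (l - k) ↪ ↥(Set.range f)ᶜ)
      = Nat.descFactorial (n - k) (l - k) := by
    rw [Fintype.card_embedding_eq, Fintype.card_compl_set,
      Set.card_range_of_injective f.injective]
    simp
  rw [← hc, mul_comm, ← nsmul_eq_mul]
  apply Finset.sum_eq_card_nsmul
  intro g _
  rw [Fin.prod_univ_add]
  have h1 : ∀ i : Fin k, (Equiv.embeddingCongr finSumFinEquiv (Equiv.refl (Fin n))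
      (Equiv.sumEmbeddingEquivSigmaEmbeddingRestricted.symm ⟨f, g⟩))
      (Fin.castAdd (l - k) i) = f i := by
    intro i
    simp [Equiv.embeddingCongr, Equiv.sumEmbeddingEquivSigmaEmbeddingRestricted,
      Equiv.sumEmbeddingEquivProdEmbeddingDisjoint, 
      Equiv.prodEmbeddingDisjointEquivSigmaEmbeddingRestricted]
    rfl
  have h2 : ∀ (i : Fin k) (j : Fin n), Matrix.of (Fin.append A
      (fun (_ : Fin (l - k)) (_ : Fin n) => (1 : ℝ))) (Fin.castAdd (l - k) i) j = A i j :=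
    fun i j => congrFun (Fin.append_left (α := Fin n → ℝ) A
      (fun (_ : Fin (l - k)) (_ : Fin n) => (1 : ℝ)) i) j
  have h3 : ∀ (i : Fin (l - k)) (j : Fin n), Matrix.of (Fin.append A
      (fun (_ : Fin (l - k)) (_ : Fin n) => (1 : ℝ))) (Fin.natAdd k i) j = 1 :=
    fun i j => congrFun (Fin.append_right (α := Fin n → ℝ) A
      (fun (_ : Fin (l - k)) (_ : Fin n) => (1 : ℝ)) i) j
  simp only [h1, h2, h3, Finset.prod_const_one, mul_one]
end

section
/- Let k+1 ≤ n and let B be any k×n matrix with entries ±1. Then the sets {per(a ∗ B) : a ∈ {−1,1}^n} and {per(ε ∗ B) : ε ∈ {0,1}^n} have the same cardinality, where v ∗ B denotes the (k+1)×n matrix whose first row is the row vector v and whose remaining rows are those of B. -/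
/-- The permanent is affine in the first row. -/
theorem rperm_cons_affine {k n : ℕ} (B : Matrix (Fin k) (Fin n) ℝ) (e : Fin n → ℝ) :
    rperm (Matrix.of (Fin.cons (fun j => 2 * e j - 1) B : Fin (k + 1) → Fin n → ℝ)) =
      2 * rperm (Matrix.of (Fin.cons e B : Fin (k + 1) → Fin n → ℝ)) -
        rperm (Matrix.of (Fin.cons (fun _ => 1) B : Fin (k + 1) → Fin n → ℝ)) := by
  unfold rperm
  rw [Finset.mul_sum, ← Finset.sum_sub_distrib]
  refine Finset.sum_congr rfl fun σ _ => ?_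
  rw [Fin.prod_univ_succ, Fin.prod_univ_succ, Fin.prod_univ_succ]
  change (2 * e (σ 0) - 1) * ∏ i : Fin k, B i (σ i.succ) =
    2 * (e (σ 0) * ∏ i : Fin k, B i (σ i.succ)) - 1 * ∏ i : Fin k, B i (σ i.succ)
  ring

/-- For `k + 1 ≤ n` and any `k × n` ±1 matrix `B`, the sets
`{per(a ∗ B) : a ∈ {−1,1}^n}` and `{per(ε ∗ B) : ε ∈ {0,1}^n}` have the same
cardinality, where `v ∗ B` prepends the row `v` to `B`. -/
theorem stmt5 (k n : ℕ) (h : k + 1 ≤ n) (B : Matrix (Fin k) (Fin n) ℝ)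
    (hpm : ∀ i j, B i j = 1 ∨ B i j = -1) :
    {x : ℝ | ∃ a : Fin n → ℝ, (∀ j, a j = 1 ∨ a j = -1) ∧
        rperm (Matrix.of (Fin.cons a B)) = x}.ncard =
    {x : ℝ | ∃ e : Fin n → ℝ, (∀ j, e j = 0 ∨ e j = 1) ∧
        rperm (Matrix.of (Fin.cons e B)) = x}.ncard := by
  have hinj : Function.Injective (fun x : ℝ =>
      2 * x - rperm (Matrix.of (Fin.cons (fun _ => 1) B : Fin (k + 1) → Fin n → ℝ))) := by
    intro x y hxy
    simp only at hxy
    linarith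
  refine Eq.trans ?_ (Set.ncard_image_of_injective _ hinj)
  congr 1
  ext x
  constructor
  · rintro ⟨a, ha, rfl⟩
    refine ⟨_, ⟨fun j => (a j + 1) / 2, fun j => ?_, rfl⟩, ?_⟩
    · rcases ha j with h | h <;> simp [h]
    · have := rperm_cons_affine B (fun j => (a j + 1) / 2)
      have h2 : (fun j => 2 * ((a j + 1) / 2) - 1) = a := by
        funext j
        ring
      simp only [h2] at this
      exact this.symm
  · rintro ⟨_, ⟨e, he, rfl⟩, rfl⟩
    refine ⟨fun j => 2 * e j - 1, fun j => ?_, rperm_cons_affine B e⟩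
    rcases he j with h | h <;> norm_num [h]
end

section
/- Let k ≤ n and let B be a k×n matrix with entries ±1. For a subset J ⊆ {1,…,k}, let Γ_{≥J} denote the set of injective functions σ : {1,…,k} → {1,…,n} such that B_{i,σ(i)} = −1 for every i ∈ J. Then per(B) = Σ_{J ⊆ {1,…,k}} (−2)^{|J|} · |Γ_{≥J}|. -/
/-- For a `k × n` ±1 matrix `B` with `k ≤ n`,
`per(B) = Σ_{J ⊆ [k]} (−2)^{|J|} · |Γ_{≥J}|`, where `Γ_{≥J}` is the set of
injections `σ : [k] ↪ [n]` with `B_{i,σ(i)} = −1` for all `i ∈ J`. -/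
theorem stmt6 (k n : ℕ) (hkn : k ≤ n) (B : Matrix (Fin k) (Fin n) ℝ)
    (hpm : ∀ i j, B i j = 1 ∨ B i j = -1) :
    rperm B = ∑ J : Finset (Fin k),
      (-2 : ℝ) ^ J.card *
        ((Finset.univ.filter fun σ : Fin k ↪ Fin n => ∀ i ∈ J, B i (σ i) = -1).card : ℝ) := by
  classical
  have key : ∀ σ : Fin k ↪ Fin n, ∏ i, B i (σ i)
      = ∑ J : Finset (Fin k), (-2 : ℝ) ^ J.card * (if ∀ i ∈ J, B i (σ i) = -1 then 1 else 0) := by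
    intro σ
    have h1 : ∀ i, B i (σ i) = 1 + (-2 : ℝ) * (if B i (σ i) = -1 then 1 else 0) := by
      intro i
      rcases hpm i (σ i) with h | h <;> rw [h] <;> norm_num
    rw [Finset.prod_congr rfl (fun i _ => h1 i), Finset.prod_one_add, Finset.powerset_univ]
    refine Finset.sum_congr rfl fun J _ => ?_
    rw [Finset.prod_mul_distrib, Finset.prod_const, Finset.prod_ite_zero]
    simp
  unfold rperm
  rw [Finset.sum_congr rfl (fun σ _ => key σ), Finset.sum_comm]
  refine Finset.sum_congr rfl fun J _ => ?_
  rw [← Finset.mul_sum, Finset.sum_boole]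
end

section
/- Let k ≤ n, let n_1,…,n_k be nonnegative integers with n_1+⋯+n_k ≤ n, and let B = B_{n_1,…,n_k}. For every subset J ⊆ {1,…,k}, the number of injective functions σ : {1,…,k} → {1,…,n} satisfying B_{i,σ(i)} = −1 for all i ∈ J equals (Π_{i∈J} n_i) · (n−|J|)_{k−|J|}, where (m)_j = m(m−1)⋯(m−j+1) is the falling factorial. -/
theorem stmt7 (k n : ℕ) (hkn : k ≤ n) (nv : Fin k → ℕ) (hsum : ∑ i, nv i ≤ n)
    (B : Matrix (Fin k) (Fin n) ℝ)
    (hpm : ∀ i j, B i j = 1 ∨ B i j = -1)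
    (hcol : ∀ j, (Finset.univ.filter fun i => B i j = -1).card ≤ 1)
    (hrow : ∀ i, (Finset.univ.filter fun j => B i j = -1).card = nv i)
    (J : Finset (Fin k)) :
    (Finset.univ.filter fun σ : Fin k ↪ Fin n => ∀ i ∈ J, B i (σ i) = -1).card =
      (∏ i ∈ J, nv i) * Nat.descFactorial (n - J.card) (k - J.card) := by
  classical
  have hinj : ∀ i i' j, B i j = -1 → B i' j = -1 → i = i' := by
    intro i i' j h h'
    exact Finset.card_le_one.mp (hcol j) i (by simpa using h) i' (by simpa using h')
  let A := {i : Fin k // i ∈ J}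
  let C := {i : Fin k // i ∉ J}
  let E1 : (Fin k ↪ Fin n) ≃ (Σ f : A ↪ Fin n, C ↪ ↥(Set.range f)ᶜ) :=
    (Equiv.embeddingCongr (Equiv.sumCompl (fun i => i ∈ J)).symm (Equiv.refl _)).trans
      Equiv.sumEmbeddingEquivSigmaEmbeddingRestricted
  have hE1 : ∀ (σ : Fin k ↪ Fin n) (a : A), (E1 σ).1 a = σ a.1 := by
    intro σ a
    rfl
  let E2 : {σ : Fin k ↪ Fin n // ∀ i ∈ J, B i (σ i) = -1} ≃
      {s : (Σ f : A ↪ Fin n, C ↪ ↥(Set.range f)ᶜ) // ∀ a : A, B a.1 (s.1 a) = -1} :=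
    E1.subtypeEquiv (by
      intro σ
      constructor
      · intro h a
        rw [hE1]; exact h a.1 a.2
      · intro h i hi
        have := h ⟨i, hi⟩
        rwa [hE1] at this)
  let E3 : {s : (Σ f : A ↪ Fin n, C ↪ ↥(Set.range f)ᶜ) // ∀ a : A, B a.1 (s.1 a) = -1} ≃
      (Σ f : {f : A ↪ Fin n // ∀ a : A, B a.1 (f a) = -1}, C ↪ ↥(Set.range f.1)ᶜ) :=
    { toFun := fun s => ⟨⟨s.1.1, s.2⟩, s.1.2⟩
      invFun := fun s => ⟨⟨s.1.1, s.2⟩, s.1.2⟩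
      left_inv := fun _ => rfl
      right_inv := fun _ => rfl }
  let E4 : {f : A ↪ Fin n // ∀ a : A, B a.1 (f a) = -1} ≃
      ((a : A) → {j : Fin n // B a.1 j = -1}) :=
    { toFun := fun f a => ⟨f.1 a, f.2 a⟩
      invFun := fun g => ⟨⟨fun a => (g a).1, fun a b hab => by
        have hb := (g b).2
        have ha := (g a).2
        simp only at hab
        rw [← hab] at hb
        exact Subtype.ext (hinj _ _ _ ha hb)⟩, fun a => (g a).2⟩
      left_inv := fun _ => rfl
      right_inv := fun _ => rfl }
  have hC : Fintype.card C = k - J.card := by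
    simp [C, Fintype.card_subtype_compl]
  have hA : Fintype.card A = J.card := by simp [A]
  have hfib : ∀ f : A ↪ Fin n, Fintype.card (C ↪ ↥(Set.range f)ᶜ) =
      Nat.descFactorial (n - J.card) (k - J.card) := by
    intro f
    rw [Fintype.card_embedding_eq, hC, Fintype.card_compl_set, Set.card_range_of_injective f.injective,
      hA, Fintype.card_fin]
  have h4 : Fintype.card {f : A ↪ Fin n // ∀ a : A, B a.1 (f a) = -1} = ∏ i ∈ J, nv i := by
    rw [Fintype.card_congr E4, Fintype.card_pi, ← Finset.prod_coe_sort J nv]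
    refine Fintype.prod_congr _ _ fun a => ?_
    rw [Fintype.card_subtype, ← hrow]
  rw [← Fintype.card_subtype, Fintype.card_congr (E2.trans E3), Fintype.card_sigma,
    Finset.sum_congr rfl (fun f _ => hfib f.1), Finset.sum_const, Finset.card_univ, h4,
    smul_eq_mul]
end

section
/- Let k+1 ≤ n, let n_1,…,n_k be positive integers with n_1+⋯+n_k ≤ n, and let B = B_{n_1,…,n_k}, arranged so that its first n_0 = n−(n_1+⋯+n_k) columns consist entirely of ones. For 1 ≤ i ≤ k set p_i = per(B_{n_1,…,n_{i−1},n_i−1,n_{i+1},…,n_k}) (a permanent of a k×(n−1) matrix). Then for every ε ∈ {0,1}^n with ε_j = 0 for all j ≤ n_0, writing x_i = #{j : ε_j = 1 and B_{i,j} = −1}, one has per(ε ∗ B) = Σ_{i=1}^{k} p_i · x_i. Consequently the set {per(ε ∗ B) : ε ∈ {0,1}^n} contains the generalized arithmetic progression {Σ_{i=1}^{k} p_i x_i : 0 ≤ x_i ≤ n_i for all i}. -/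
theorem aux_perm {α β : Type*} [Fintype α] [DecidableEq β] (f g : α → β)
    (h : ∀ b, (Finset.univ.filter fun a => f a = b).card
      = (Finset.univ.filter fun a => g a = b).card) :
    ∃ t : α ≃ α, ∀ a, f (t a) = g a := by
  have h2 : ∀ b, Nonempty ({a // g a = b} ≃ {a // f a = b}) := by
    intro b
    apply Fintype.card_eq.mp
    rw [Fintype.card_subtype, Fintype.card_subtype]
    exact (h b).symm
  let E := fun b => (h2 b).some
  refine ⟨(Equiv.sigmaFiberEquiv g).symm.trans
    ((Equiv.sigmaCongrRight E).trans (Equiv.sigmaFiberEquiv f)), ?_⟩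
  intro a
  exact (E (g a) ⟨a, rfl⟩).2

theorem aux_label {k m : ℕ} (C : Matrix (Fin k) (Fin m) ℝ)
    (hcol : ∀ j, (Finset.univ.filter fun i => C i j = -1).card ≤ 1) :
    ∃ f : Fin m → Option (Fin k), ∀ j i, f j = some i ↔ C i j = -1 := by
  have : ∀ j, ∃ o : Option (Fin k), ∀ i, o = some i ↔ C i j = -1 := by
    intro j
    by_cases h : ∃ i, C i j = -1
    · obtain ⟨i, hi⟩ := h
      refine ⟨some i, fun i' => ⟨?_, ?_⟩⟩
      · intro h; cases h; exact hi
      · intro h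
        have := Finset.card_le_one.mp (hcol j) i (by simp [hi]) i' (by simp [h])
        rw [this]
    · refine ⟨none, fun i' => ⟨by simp, fun h' => (h ⟨i', h'⟩).elim⟩⟩
  exact Classical.skolem.mp this

theorem aux_same {k m : ℕ} (C D : Matrix (Fin k) (Fin m) ℝ)
    (hC : ∀ i j, C i j = 1 ∨ C i j = -1) (hD : ∀ i j, D i j = 1 ∨ D i j = -1)
    (hcC : ∀ j, (Finset.univ.filter fun i => C i j = -1).card ≤ 1)
    (hcD : ∀ j, (Finset.univ.filter fun i => D i j = -1).card ≤ 1)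
    (h : ∀ i, (Finset.univ.filter fun j => C i j = -1).card
      = (Finset.univ.filter fun j => D i j = -1).card) : rperm C = rperm D := by
  obtain ⟨f, hf⟩ := aux_label C hcC
  obtain ⟨g, hg⟩ := aux_label D hcD
  have hs : ∀ i, (Finset.univ.filter fun a => f a = some i).card
      = (Finset.univ.filter fun a => g a = some i).card := by
    intro i
    simp only [hf, hg]
    exact h i
  obtain ⟨t, ht⟩ := aux_perm f g (by
    intro b
    cases b with
    | some i => exact hs i
    | none =>
      have h1 := Finset.card_eq_sum_card_fiberwise (f := f) (s := Finset.univ)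
        (t := Finset.univ) (by simp)
      have h2 := Finset.card_eq_sum_card_fiberwise (f := g) (s := Finset.univ)
        (t := Finset.univ) (by simp)
      rw [Fintype.sum_option] at h1 h2
      rw [Finset.sum_congr rfl (fun i _ => hs i)] at h1
      omega)
  have hCD : ∀ i j, C i (t j) = D i j := by
    intro i j
    have h1 : C i (t j) = -1 ↔ D i j = -1 := by rw [← hf, ← hg, ht]
    rcases hC i (t j) with h2 | h2 <;> rcases hD i j with h3 | h3
    · rw [h2, h3]
    · rw [h1.2 h3, h3]
    · rw [h2, h1.1 h2]
    · rw [h2, h3]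
  unfold rperm
  symm
  refine Fintype.sum_equiv (Equiv.embeddingCongr (Equiv.refl _) t) _ _ ?_
  intro σ
  refine Finset.prod_congr rfl fun i _ => ?_
  simp [hCD]

theorem aux_laplace {k m : ℕ} (e : Fin (m + 1) → ℝ) (B : Matrix (Fin k) (Fin (m + 1)) ℝ) :
    rperm (Matrix.of (Fin.cons e B) : Matrix (Fin (k + 1)) (Fin (m + 1)) ℝ)
      = ∑ j, e j * rperm (Matrix.of fun i l => B i (j.succAbove l)) := by
  unfold rperm
  simp only [Finset.mul_sum]
  rw [← Fintype.sum_prod_type']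
  symm
  let F : Fin (m + 1) × (Fin k ↪ Fin m) → (Fin (k + 1) ↪ Fin (m + 1)) := fun q =>
    ⟨Fin.cons q.1 (fun i => q.1.succAbove (q.2 i)), by
      rw [Fin.cons_injective_iff]
      refine ⟨?_, ?_⟩
      · rintro ⟨i, hi⟩
        exact Fin.succAbove_ne _ _ hi
      · intro a b hab
        exact q.2.injective (Fin.succAbove_right_injective hab)⟩
  have F0 : ∀ q, F q 0 = q.1 := fun q => rfl
  have FS : ∀ q i, F q (Fin.succ i) = q.1.succAbove (q.2 i) := fun q i => rfl
  refine Fintype.sum_bijective F ⟨?_, ?_⟩ _ _ ?_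
  · rintro ⟨j, s⟩ ⟨j', s'⟩ h
    have h0 : j = j' := by
      have := DFunLike.congr_fun h 0
      rwa [F0, F0] at this
    subst h0
    congr 1
    ext i
    have := DFunLike.congr_fun h i.succ
    rw [FS, FS] at this
    exact congrArg Fin.val (Fin.succAbove_right_injective this)
  · intro σ
    have : ∀ i : Fin k, ∃ l, (σ 0).succAbove l = σ i.succ := by
      intro i
      apply Fin.exists_succAbove_eq
      intro h
      exact Fin.succ_ne_zero i (σ.injective h)
    choose s hs using this
    refine ⟨(σ 0, ⟨s, ?_⟩), ?_⟩
    · intro a b hab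
      have : σ a.succ = σ b.succ := by rw [← hs, ← hs, hab]
      exact Fin.succ_injective _ (σ.injective this)
    · ext i
      refine Fin.cases ?_ (fun i => ?_) i
      · rw [F0]
      · rw [FS]; exact congrArg Fin.val (hs i)
  · intro q
    rw [Fin.prod_univ_succ]
    rfl

/-- Let `k + 1 ≤ n`, let `n_1,…,n_k` be positive with `n_1+⋯+n_k ≤ n`, and let `B`
be a matrix of type `B_{n_1,…,n_k}` whose first `n_0 = n − Σ n_i` columns are all ones.
Let `p_i` be the permanent of (any) `k × (n−1)` matrix of type
`B_{n_1,…,n_i−1,…,n_k}`. Then for every `ε ∈ {0,1}^n` vanishing on the first `n_0`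
coordinates, `per(ε ∗ B) = Σ_i p_i x_i` where
`x_i = #{j : ε_j = 1 ∧ B_{i,j} = −1}`; consequently `{per(ε ∗ B) : ε ∈ {0,1}^n}`
contains the GAP `{Σ_i p_i x_i : 0 ≤ x_i ≤ n_i}`. -/
theorem stmt9 (k n : ℕ) (hkn : k + 1 ≤ n) (nv : Fin k → ℕ) (hpos : ∀ i, 1 ≤ nv i)
    (hsum : ∑ i, nv i ≤ n)
    (B : Matrix (Fin k) (Fin n) ℝ)
    (hpm : ∀ i j, B i j = 1 ∨ B i j = -1)
    (hcol : ∀ j, (Finset.univ.filter fun i => B i j = -1).card ≤ 1)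
    (hrow : ∀ i, (Finset.univ.filter fun j => B i j = -1).card = nv i)
    (hfirst : ∀ j : Fin n, (j : ℕ) < n - ∑ i, nv i → ∀ i, B i j = 1)
    (p : Fin k → ℝ)
    (hp : ∀ i : Fin k, ∃ C : Matrix (Fin k) (Fin (n - 1)) ℝ,
      (∀ i' j, C i' j = 1 ∨ C i' j = -1) ∧
      (∀ j, (Finset.univ.filter fun i' => C i' j = -1).card ≤ 1) ∧
      (∀ i', (Finset.univ.filter fun j => C i' j = -1).card
          = Function.update nv i (nv i - 1) i') ∧
      rperm C = p i) :
    (∀ e : Fin n → ℝ, (∀ j, e j = 0 ∨ e j = 1) →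
      (∀ j : Fin n, (j : ℕ) < n - ∑ i, nv i → e j = 0) →
      rperm (Matrix.of (Fin.cons e B)) =
        ∑ i, p i * ((Finset.univ.filter fun j => e j = 1 ∧ B i j = -1).card : ℝ)) ∧
    (∀ x : Fin k → ℕ, (∀ i, x i ≤ nv i) →
      ∃ e : Fin n → ℝ, (∀ j, e j = 0 ∨ e j = 1) ∧
        rperm (Matrix.of (Fin.cons e B)) = ∑ i, p i * (x i : ℝ)) := by
  obtain ⟨m, rfl⟩ : ∃ m, n = m + 1 := ⟨n - 1, by omega⟩
  obtain ⟨f, hf⟩ := aux_label B hcol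
  -- minor lemma
  have hminor : ∀ i j, B i j = -1 →
      rperm (Matrix.of fun i' l => B i' (j.succAbove l)) = p i := by
    intro i j hij
    obtain ⟨C, hC, hcC, hrC, hpC⟩ : ∃ C : Matrix (Fin k) (Fin m) ℝ,
      (∀ i' j, C i' j = 1 ∨ C i' j = -1) ∧
      (∀ j, (Finset.univ.filter fun i' => C i' j = -1).card ≤ 1) ∧
      (∀ i', (Finset.univ.filter fun j => C i' j = -1).card
          = Function.update nv i (nv i - 1) i') ∧
      rperm C = p i := hp i
    rw [← hpC]
    refine aux_same _ _ (fun i' l => hpm _ _) hC (fun l => hcol _) hcC ?_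
    intro i'
    refine Eq.trans ?_ (hrC i').symm
    have h1 := hrow i'
    rw [Finset.card_filter, Fin.sum_univ_succAbove _ j] at h1
    have key : (Finset.univ.filter fun l : Fin m => B i' (j.succAbove l) = -1).card
        = ∑ l : Fin m, if B i' (j.succAbove l) = -1 then 1 else 0 := Finset.card_filter _ _
    refine Eq.trans (Eq.trans ?_ key) ?_
    · rfl
    by_cases hi : i' = i
    · subst hi
      rw [if_pos hij] at h1
      rw [Function.update_self]
      omega
    · rw [Function.update_of_ne hi]
      have : ¬ B i' j = -1 := by
        intro h
        rw [← hf] at h hij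
        rw [h] at hij
        exact hi (Option.some.inj hij)
      rw [if_neg this] at h1
      omega
  -- every later column has a -1
  have hex : ∀ j : Fin (m + 1), ¬ (j : ℕ) < (m + 1) - ∑ i, nv i → ∃ i, B i j = -1 := by
    have hsub : (Finset.univ.filter fun j : Fin (m + 1) => (j : ℕ) < (m + 1) - ∑ i, nv i)
        ⊆ (Finset.univ.filter fun j => f j = none) := by
      intro j hj
      simp only [Finset.mem_filter, Finset.mem_univ, true_and] at hj ⊢
      rw [Option.eq_none_iff_forall_ne_some]
      intro i hi
      rw [hf, hfirst j hj i] at hi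
      norm_num at hi
    have h1 := Finset.card_eq_sum_card_fiberwise (f := f) (s := Finset.univ)
        (t := Finset.univ) (by simp)
    rw [Fintype.sum_option] at h1
    simp only [hf, hrow, Finset.card_univ, Fintype.card_fin] at h1
    have h2 : (Finset.univ.filter fun j : Fin (m + 1) => (j : ℕ) < (m + 1) - ∑ i, nv i).card
        = (m + 1) - ∑ i, nv i := by
      rw [Fin.card_filter_val_lt]
      omega
    have h3 := Finset.eq_of_subset_of_card_le hsub (by omega)
    intro j hj
    cases hj' : f j with
    | some i => exact ⟨i, (hf j i).1 hj'⟩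
    | none =>
      have : j ∈ (Finset.univ.filter fun j => f j = none) := by simp [hj']
      rw [← h3] at this
      simp only [Finset.mem_filter, Finset.mem_univ, true_and] at this
      exact absurd this hj
  have main : ∀ e : Fin (m + 1) → ℝ, (∀ j, e j = 0 ∨ e j = 1) →
      (∀ j : Fin (m + 1), (j : ℕ) < (m + 1) - ∑ i, nv i → e j = 0) →
      rperm (Matrix.of (Fin.cons e B)) =
        ∑ i, p i * ((Finset.univ.filter fun j => e j = 1 ∧ B i j = -1).card : ℝ) := by
    intro e he he0
    rw [aux_laplace]
    simp only [Finset.card_filter, Nat.cast_sum, Finset.mul_sum]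
    rw [Finset.sum_comm]
    refine Finset.sum_congr rfl fun j _ => ?_
    rcases he j with h | h
    · simp [h]
    · obtain ⟨i, hi⟩ := hex j (fun hj => by rw [he0 j hj] at h; norm_num at h)
      rw [hminor i j hi, Finset.sum_eq_single i]
      · simp [h, hi]
      · intro i' _ hne
        have : ¬ B i' j = -1 := by
          intro h'
          rw [← hf] at h' hi
          rw [h'] at hi
          exact hne (Option.some.inj hi)
        simp [this]
      · simp
  refine ⟨main, ?_⟩
  intro x hx
  have hS : ∀ i, ∃ S ⊆ (Finset.univ.filter fun j => B i j = -1), S.card = x i := by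
    intro i
    exact Finset.exists_subset_card_eq (by rw [hrow]; exact hx i)
  choose S hS hScard using hS
  have hS' : ∀ i j, j ∈ S i → B i j = -1 := fun i j hj => by
    simpa using hS i hj
  classical
  refine ⟨fun j => if ∃ i, j ∈ S i then 1 else 0, ?_, ?_⟩
  · intro j
    by_cases h : ∃ i, j ∈ S i
    · right; exact if_pos h
    · left; exact if_neg h
  · rw [main]
    · refine Finset.sum_congr rfl fun i _ => ?_
      rw [← hScard i]
      congr 3
      ext j
      simp only [Finset.mem_filter, Finset.mem_univ, true_and]
      constructor
      · rintro ⟨h1, h2⟩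
        by_cases h : ∃ i, j ∈ S i
        · obtain ⟨i', hi'⟩ := h
          have h3 := hS' i' j hi'
          rw [← hf] at h2 h3
          rw [h2] at h3
          rw [Option.some.inj h3]
          exact hi'
        · rw [if_neg h] at h1
          norm_num at h1
      · intro h
        exact ⟨if_pos ⟨i, h⟩, hS' i j h⟩
    · intro j
      by_cases h : ∃ i, j ∈ S i
      · right; exact if_pos h
      · left; exact if_neg h
    · intro j hj
      apply if_neg
      rintro ⟨i, hi⟩
      have := hS' i j hi
      rw [hfirst j hj i] at this
      norm_num at this
end

section
/- Let m ≥ 1 and let x_1,…,x_m be pairwise distinct elements of a field of characteristic zero (e.g. ℚ or ℝ). Then the m×m matrix A with entries A_{ℓ,i} = e_{ℓ−1}(x_1,…,x_{i−1},x_{i+1},…,x_m) for 1 ≤ ℓ, i ≤ m is invertible; equivalently, the m vectors R_ℓ = (e_{ℓ−1}(x_1,…,x_{i−1},x_{i+1},…,x_m))_{i=1,…,m}, for 1 ≤ ℓ ≤ m, are linearly independent. -/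
/-- For `m ≥ 1` and pairwise distinct elements `x_1,…,x_m` of a field of
characteristic zero, the `m × m` matrix with entries
`A_{ℓ,i} = e_{ℓ−1}(x_1,…,x_{i−1},x_{i+1},…,x_m)` is invertible. -/
theorem stmt14 {F : Type*} [Field F] [CharZero F] (m : ℕ) (hm : 1 ≤ m)
    (x : Fin m → F) (hx : Function.Injective x) :
    IsUnit (Matrix.of fun l i : Fin m =>
      ∑ S ∈ Finset.powersetCard (l : ℕ) (Finset.univ.erase i), ∏ t ∈ S, x t) := by
  have key : ∀ (y : F) (i : Fin m), ∏ t ∈ Finset.univ.erase i, (x t + y) =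
      ∑ l : Fin m, y ^ (m - 1 - (l : ℕ)) *
        ∑ S ∈ Finset.powersetCard (l : ℕ) (Finset.univ.erase i), ∏ t ∈ S, x t := by
    intro y i
    have hc : (Finset.univ.erase i : Finset (Fin m)).card = m - 1 := by
      simp [Finset.card_erase_of_mem]
    rw [Finset.prod_add, Finset.sum_powerset, hc, Nat.sub_add_cancel hm,
      Finset.sum_range]
    refine Finset.sum_congr rfl fun l _ => ?_
    rw [Finset.mul_sum]
    refine Finset.sum_congr rfl fun S hS => ?_
    rw [Finset.mem_powersetCard] at hS
    rw [Finset.prod_const, Finset.card_sdiff_of_subset hS.1, hc, hS.2, mul_comm]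
  rw [← Matrix.mulVec_injective_iff_isUnit]
  rw [← Matrix.coe_mulVecLin, ← LinearMap.ker_eq_bot, LinearMap.ker_eq_bot']
  intro v hv
  funext j
  have h1 : ∑ i, v i * ∏ t ∈ Finset.univ.erase i, (x t + -x j) = 0 := by
    simp_rw [key, Finset.mul_sum]
    rw [Finset.sum_comm]
    refine Finset.sum_eq_zero fun l _ => ?_
    have h2 := congrFun hv l
    simp only [Matrix.mulVecLin_apply, Matrix.mulVec, dotProduct, Matrix.of_apply,
      Pi.zero_apply] at h2
    simp_rw [← Finset.mul_sum]
    rw [← mul_zero ((-x j) ^ (m - 1 - (l : ℕ))), ← h2, Finset.mul_sum]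
    refine Finset.sum_congr rfl fun i _ => ?_
    ring
  rw [Finset.sum_eq_single j] at h1
  · rcases mul_eq_zero.1 h1 with h | h
    · exact h
    · obtain ⟨t, ht, h⟩ := Finset.prod_eq_zero_iff.1 h
      rw [← sub_eq_add_neg, sub_eq_zero] at h
      exact absurd (hx h) (Finset.ne_of_mem_erase ht)
  · intro i _ hij
    rw [Finset.prod_eq_zero (i := j) (by simp [hij.symm]) (by simp), mul_zero]
  · simp
end

section
/- Fix an integer k ≥ 2 and a rational number n_0. For 2 ≤ ℓ ≤ k define the vector S_ℓ ∈ ℚ^{k−1} with coordinates indexed by j ∈ {0,1,…,k−2} given by (S_ℓ)_j = (−1)^j · e_j(n_0,…,n_0, ℓ+1, ℓ+2,…,k), where n_0 appears ℓ−1 times among the arguments of the j-th elementary symmetric polynomial. Then the ℚ-linear span of {S_ℓ : 2 ≤ ℓ ≤ k} has dimension at least k−2. -/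
/-- The `j`-th elementary symmetric function of a multiset of rationals. -/
def msEsymm (s : Multiset ℚ) (j : ℕ) : ℚ :=
  ((s.powersetCard j).map Multiset.prod).sum

/-- For `2 ≤ ℓ ≤ k`, the vector `S_ℓ ∈ ℚ^{k−1}` with coordinates
`(S_ℓ)_j = (−1)^j · e_j(n_0,…,n_0, ℓ+1, ℓ+2, …, k)` for `j ∈ {0,…,k−2}`,
where `n_0` appears `ℓ − 1` times. -/
def Svec (k : ℕ) (n0 : ℚ) (l : ℕ) : Fin (k - 1) → ℚ :=
  fun j => (-1) ^ (j : ℕ) *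
    msEsymm
      (Multiset.replicate (l - 1) n0 +
        ((Finset.Icc (l + 1) k).val.map fun m => (m : ℚ)))
      (j : ℕ)

open Polynomial in
lemma aux_indep (a : ℚ) (T : Finset ℕ) (f : ℕ → ℚ[X]) (hf : ∀ l ∈ T, f l ≠ 0)
    (hd : ∀ l ∈ T, ∀ l' ∈ T, l < l' → (f l).rootMultiplicity a < (f l').rootMultiplicity a)
    (c : ℕ → ℚ) (h : ∑ l ∈ T, c l • f l = 0) : ∀ l ∈ T, c l = 0 := by
  intro l
  induction l using Nat.strong_induction_on with
  | _ l ih =>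
    intro hl
    by_contra hc
    rw [← Finset.add_sum_erase T _ hl] at h
    have hdvd : (X - C a) ^ ((f l).rootMultiplicity a + 1) ∣ ∑ x ∈ T.erase l, c x • f x := by
      apply Finset.dvd_sum
      intro x hx
      obtain ⟨hne, hxT⟩ := Finset.mem_erase.1 hx
      rcases lt_or_gt_of_ne hne with hlt | hgt
      · rw [ih x hlt hxT, zero_smul]
        exact dvd_zero _
      · rw [smul_eq_C_mul]
        apply Dvd.dvd.mul_left
        exact (le_rootMultiplicity_iff (hf x hxT)).1 (hd l hl x hxT hgt)
    have h2 : (X - C a) ^ ((f l).rootMultiplicity a + 1) ∣ c l • f l := by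
      rw [eq_neg_of_add_eq_zero_left h]
      exact (dvd_neg).2 hdvd
    have h3 : (X - C a) ^ ((f l).rootMultiplicity a + 1) ∣ f l := by
      have := Dvd.dvd.mul_left h2 (C (c l)⁻¹)
      rwa [smul_eq_C_mul, ← mul_assoc, ← C_mul, inv_mul_cancel₀ hc, C_1, one_mul] at this
    have := (le_rootMultiplicity_iff (hf l hl)).2 h3
    omega

/-- The multiset of arguments. -/
def auxMs (k : ℕ) (n0 : ℚ) (l : ℕ) : Multiset ℚ :=
  Multiset.replicate (l - 1) n0 + ((Finset.Icc (l + 1) k).val.map fun m => (m : ℚ))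

open Polynomial in
/-- The associated monic polynomial. -/
noncomputable def auxQ (k : ℕ) (n0 : ℚ) (l : ℕ) : ℚ[X] :=
  ((auxMs k n0 l).map fun t => X - C t).prod

lemma auxMs_card (k : ℕ) (n0 : ℚ) (l : ℕ) (h2 : 2 ≤ l) (hl : l ≤ k) :
    (auxMs k n0 l).card = k - 1 := by
  simp [auxMs]
  omega

lemma auxQ_ne (k : ℕ) (n0 : ℚ) (l : ℕ) : auxQ k n0 l ≠ 0 :=
  (Polynomial.monic_multisetProd_X_sub_C _).ne_zero

lemma auxQ_mult (k : ℕ) (n0 : ℚ) (l : ℕ) :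
    (auxQ k n0 l).rootMultiplicity n0 = (auxMs k n0 l).count n0 := by
  rw [← Polynomial.count_roots, auxQ, Polynomial.roots_multiset_prod_X_sub_C]

lemma auxMs_count (k : ℕ) (n0 : ℚ) (l : ℕ) :
    (auxMs k n0 l).count n0 = (l - 1) +
      ((Finset.Icc (l + 1) k).filter fun m : ℕ => n0 = (m : ℚ)).card := by
  rw [auxMs, Multiset.count_add, Multiset.count_replicate_self, Multiset.count_map]
  simp only [Multiset.bind_def, Multiset.pure_def, Multiset.bind_singleton, Multiset.filter_map,
    Multiset.card_map]
  rfl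

lemma auxMs_count_lt (k : ℕ) (n0 : ℚ) (l l' : ℕ) (h2 : 2 ≤ l) (hll : l < l') (hl' : l' ≤ k)
    (hne' : (l' : ℚ) ≠ n0) :
    (auxMs k n0 l).count n0 < (auxMs k n0 l').count n0 := by
  rw [auxMs_count, auxMs_count]
  by_cases h : ∃ m : ℕ, n0 = m
  · obtain ⟨m, rfl⟩ := h
    have hm : l' ≠ m := fun h => hne' (by rw [h])
    simp only [Nat.cast_inj, Finset.filter_eq, Finset.mem_Icc]
    split_ifs <;> simp <;> omega
  · push Not at h
    simp [h]
    omega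

lemma Svec_coeff (k : ℕ) (n0 : ℚ) (l : ℕ) (h2 : 2 ≤ l) (hl : l ≤ k) (j : Fin (k - 1)) :
    Svec k n0 l j = (auxQ k n0 l).coeff (k - 1 - j) := by
  have hj := j.2
  rw [auxQ, Multiset.prod_X_sub_C_coeff _ (by rw [auxMs_card k n0 l h2 hl]; omega),
    auxMs_card k n0 l h2 hl, show k - 1 - (k - 1 - (j : ℕ)) = j by omega]
  rfl

lemma aux_eval (k : ℕ) (n0 : ℚ) (l : ℕ) (h2 : 2 ≤ l) : (auxQ k n0 l).eval n0 = 0 := by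
  have : 0 < (auxQ k n0 l).rootMultiplicity n0 := by
    rw [auxQ_mult, auxMs_count]; omega
  exact (Polynomial.rootMultiplicity_pos (auxQ_ne k n0 l)).1 this

lemma aux_deg (k : ℕ) (n0 : ℚ) (l : ℕ) (h2 : 2 ≤ l) (hl : l ≤ k) :
    (auxQ k n0 l).natDegree = k - 1 := by
  rw [auxQ, Polynomial.natDegree_multiset_prod_X_sub_C_eq_card, auxMs_card k n0 l h2 hl]

lemma Svec_indep (k : ℕ) (n0 : ℚ) (T : Finset ℕ)
    (hT : ∀ l ∈ T, 2 ≤ l ∧ l ≤ k ∧ (l : ℚ) ≠ n0) (c : ℕ → ℚ)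
    (h : ∑ l ∈ T, c l • Svec k n0 l = 0) : ∀ l ∈ T, c l = 0 := by
  apply aux_indep n0 T (auxQ k n0) (fun l _ => auxQ_ne k n0 l)
  · intro l hl l' hl' hlt
    rw [auxQ_mult, auxQ_mult]
    exact auxMs_count_lt k n0 l l' (hT l hl).1 hlt (hT l' hl').2.1 (hT l' hl').2.2
  · set R := ∑ l ∈ T, c l • auxQ k n0 l with hR
    have hcoef : ∀ i, 0 < i → R.coeff i = 0 := by
      intro i hi
      rw [hR, Polynomial.finsetSum_coeff]
      by_cases hik : i ≤ k - 1
      · have hj := congrFun h ⟨k - 1 - i, by omega⟩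
        rw [Finset.sum_apply] at hj
        rw [← Pi.zero_apply (M := fun _ : Fin (k - 1) => ℚ), ← hj]
        apply Finset.sum_congr rfl
        intro l hl
        rw [Pi.smul_apply, Svec_coeff k n0 l (hT l hl).1 (hT l hl).2.1, Polynomial.coeff_smul]
        congr 2
        simp only
        omega
      · apply Finset.sum_eq_zero
        intro l hl
        rw [Polynomial.coeff_smul, Polynomial.coeff_eq_zero_of_natDegree_lt, smul_zero]
        rw [aux_deg k n0 l (hT l hl).1 (hT l hl).2.1]
        omega
    have hconst : R = Polynomial.C (R.coeff 0) := by
      ext i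
      rcases Nat.eq_zero_or_pos i with rfl | hi
      · simp
      · rw [hcoef i hi, Polynomial.coeff_C_of_ne_zero (by omega)]
    have hev : R.eval n0 = 0 := by
      rw [hR, Polynomial.eval_finsetSum]
      apply Finset.sum_eq_zero
      intro l hl
      rw [Polynomial.eval_smul, aux_eval k n0 l (hT l hl).1, smul_zero]
    rw [hconst, Polynomial.eval_C] at hev
    rw [hconst, hev, Polynomial.C_0]
  
/-- For `k ≥ 2` and a rational `n_0`, the ℚ-linear span of the vectors
`S_ℓ`, `2 ≤ ℓ ≤ k`, has dimension at least `k − 2`. -/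
theorem stmt15 (k : ℕ) (hk : 2 ≤ k) (n0 : ℚ) :
    k - 2 ≤ Module.finrank ℚ
      (Submodule.span ℚ
        {v : Fin (k - 1) → ℚ | ∃ l : ℕ, 2 ≤ l ∧ l ≤ k ∧ v = Svec k n0 l}) := by
  classical
  obtain ⟨T, hT, hcard⟩ : ∃ T : Finset ℕ, (∀ l ∈ T, 2 ≤ l ∧ l ≤ k ∧ (l : ℚ) ≠ n0) ∧
      k - 2 ≤ T.card := by
    by_cases h : ∃ m : ℕ, n0 = m
    · obtain ⟨m, rfl⟩ := h
      refine ⟨(Finset.Icc 2 k).erase m, ?_, ?_⟩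
      · intro l hl
        simp only [Finset.mem_erase, Finset.mem_Icc] at hl
        exact ⟨hl.2.1, hl.2.2, by exact_mod_cast hl.1⟩
      · have := Finset.pred_card_le_card_erase (s := Finset.Icc 2 k) (a := m)
        rw [Nat.card_Icc] at this
        omega
    · push Not at h
      refine ⟨Finset.Icc 2 k, ?_, ?_⟩
      · intro l hl
        rw [Finset.mem_Icc] at hl
        exact ⟨hl.1, hl.2, (h l).symm⟩
      · rw [Nat.card_Icc]; omega
  have hli : LinearIndependent ℚ (fun l : T => Svec k n0 l) := by
    rw [Fintype.linearIndependent_iff]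
    intro g hg i
    have := Svec_indep k n0 T hT (fun l => if h : l ∈ T then g ⟨l, h⟩ else 0) (by
      rw [← Finset.sum_coe_sort, ← hg]
      apply Finset.sum_congr rfl
      intro x _
      simp) i i.2
    simpa using this
  have h1 := finrank_span_eq_card hli
  rw [Fintype.card_coe] at h1
  refine hcard.trans (h1.symm.le.trans (Submodule.finrank_mono (Submodule.span_mono ?_)))
  rintro v ⟨l, rfl⟩
  exact ⟨l, (hT l l.2).1, (hT l l.2).2.1, rfl⟩
end
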